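/- Let Γ be a set of temporal valued relations on ℚ such that the crisp binary relation < belongs to ⟨Γ⟩, some relation of Γ attains at least two distinct finite values, and some lex-operation fails to preserve some crisp relation in ⟨Γ⟩ (i.e., there are a crisp relation S ∈ ⟨Γ⟩ of arity k, a lex-operation ℓ, and tuples s, t ∈ S with the componentwise image ℓ(s,t) ∉ S). Then ⟨Γ⟩ contains at least one of the crisp relations Betw, Cyc, Sep, T₃, −T₃, Dis. -/

import Mathlib

/-!
The proof shows more than is claimed: `⟨Γ⟩` contains `Betw` or `Cyc`. Suppose that it contains
neither; the contradiction is that every crisp relation of `⟨Γ⟩` is preserved by all lex-operations.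

By homogeneity of `(ℚ, <)`, the value of a temporal relation on a tuple depends only on the order
type of the tuple. In particular temporal relations have finite range and infima are attained, so
the projection of `R ∈ ⟨Γ⟩` to two coordinates is a cost `Rabc a b c`, where `a`, `b`, `c` are the
minima of `R` over tuples with `=`, `<`, `>` at these coordinates (`Clone.exists_Rabc`).

*Binary costs.* If `c < b < ∞` or `a < b < ∞`, then `Betw` or `Cyc` is the set of minimizers of a sum
of such costs, possibly after projection: a cost that prefers equality simulates a three-terminal
cut, from which `Betw` is obtained, and otherwise the cost of an oriented triangle has `Cyc` as its
set of minimizers (`Clone.hard_of_gt_lt`, `Clone.hard_of_eq_lt`).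

*Refinement.* Consequently, if `R t` is finite and `y` is arbitrary, there is `u` with `R u ≤ R y`
such that `t i < t j` implies `u i < u j` (`Clone.refine`). If equalities of `t` could always be
imposed without extra cost as well, then `R t ≤ R y` would follow; since some relation takes two
finite values, equality is penalized by some cost, and after normalization `Rabc 1 0 ⊤` or
`Rabc 1 0 0` belongs to `⟨Γ⟩` (`Clone.exists_soft`).

*Lex-operations.* Let `s`, `t` satisfy a crisp relation `S`. Adding soft constraints to `S` that are
free at `t` and affordable at `s`, and refining along `s`, merges the two tuples (`Clone.merge`). With
`Rabc 1 0 ⊤`, a soft version of `<`, this directly yields the order type of `ℓ(s, t)`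
(`Clone.lex_of_top`). With `Rabc 1 0 0`, a soft version of `≠`, ties of `s` are split where `t` has no
tie, but in an uncontrolled order. This is repaired by merging a whole grid of points, passing by
Ramsey's theorem to columns on which all rows are monotone, and choosing columns twice, so that
decreasing rows reverse the order twice (`Clone.lex_of_zero`).
-/

open Classical

/-- A valued relation of arity `k` on `ℚ`. -/
abbrev VRel (k : ℕ) : Type := (Fin k → ℚ) → WithTop ℚ

/-- The crisp valued relation associated to a set of tuples: `0` on the set, `∞` off it. -/
noncomputable def crisp {k : ℕ} (S : Set (Fin k → ℚ)) : VRel k :=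
  fun t => if t ∈ S then 0 else ⊤

/-- A unary operation improves a valued relation. -/
def Improves1 (f : ℚ → ℚ) {k : ℕ} (R : VRel k) : Prop :=
  ∀ t : Fin k → ℚ, R (fun i => f (t i)) ≤ R t

/-- A binary operation improves a valued relation: `2·R(g(s,t)) ≤ R(s) + R(t)`. -/
def Improves2 (g : ℚ → ℚ → ℚ) {k : ℕ} (R : VRel k) : Prop :=
  ∀ s t : Fin k → ℚ, 2 • R (fun i => g (s i) (t i)) ≤ R s + R t

/-- A valued relation is temporal if it is invariant under all order-preserving
bijections of `ℚ`. -/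
def Temporal {k : ℕ} (R : VRel k) : Prop :=
  ∀ α : ℚ → ℚ, Function.Bijective α → StrictMono α →
    ∀ t : Fin k → ℚ, R (fun i => α (t i)) = R t

/-- A valued relation is `Sym(ℚ)`-invariant if it is invariant under all bijections of `ℚ`. -/
def SymInvariant {k : ℕ} (R : VRel k) : Prop :=
  ∀ α : ℚ → ℚ, Function.Bijective α →
    ∀ t : Fin k → ℚ, R (fun i => α (t i)) = R t

/-- The valued relational clone generated by a set `Γ` of valued relations on `ℚ`:
the smallest set of valued relations containing `Γ`, crisp equality and the crisp empty
unary relation, closed under sums of atomic expressions, projection (infimum over extra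
coordinates), shifting, nonnegative scaling, `Feas` and `Opt`. -/
inductive Clone (Γ : Set ((k : ℕ) × VRel k)) : {k : ℕ} → VRel k → Prop where
  | base {k : ℕ} {R : VRel k} : Sigma.mk k R ∈ Γ → Clone Γ R
  | eqRel : Clone Γ (crisp {t : Fin 2 → ℚ | t 0 = t 1})
  | emptyRel : Clone Γ (crisp (∅ : Set (Fin 1 → ℚ)))
  | sum {m n : ℕ} {k : Fin m → ℕ} {R : ∀ i : Fin m, VRel (k i)}
      (σ : ∀ i : Fin m, Fin (k i) → Fin n) :
      (∀ i : Fin m, Clone Γ (R i)) →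
      Clone Γ (fun x : Fin n → ℚ => ∑ i : Fin m, R i (fun j => x (σ i j)))
  | proj {k n : ℕ} {R : VRel (k + n)} {R' : VRel k} :
      Clone Γ R →
      (∀ s : Fin k → ℚ,
        IsGLB {v : WithTop ℚ | ∃ t : Fin n → ℚ, v = R (Fin.append s t)} (R' s)) →
      Clone Γ R'
  | shift {k : ℕ} {R : VRel k} (c : ℚ) :
      Clone Γ R → Clone Γ (fun t => R t + (c : WithTop ℚ))
  | scale {k : ℕ} {R : VRel k} (q : ℚ) (hq : 0 ≤ q) :
      Clone Γ R → Clone Γ (fun t => (q : WithTop ℚ) * R t)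
  | feas {k : ℕ} {R : VRel k} :
      Clone Γ R → Clone Γ (fun t => if R t ≠ ⊤ then 0 else ⊤)
  | opt {k : ℕ} {R : VRel k} :
      Clone Γ R → Clone Γ (fun t => if R t ≠ ⊤ ∧ ∀ s, R t ≤ R s then 0 else ⊤)

/-- The crisp binary order relation `<` on `ℚ`. -/
def LtS : Set (Fin 2 → ℚ) := {t | t 0 < t 1}

/-- The crisp binary disequality relation on `ℚ`. -/
def NeS : Set (Fin 2 → ℚ) := {t | t 0 ≠ t 1}

def BetwS : Set (Fin 3 → ℚ) :=
  {t | (t 0 < t 1 ∧ t 1 < t 2) ∨ (t 2 < t 1 ∧ t 1 < t 0)}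

def CycS : Set (Fin 3 → ℚ) :=
  {t | (t 0 < t 1 ∧ t 1 < t 2) ∨ (t 1 < t 2 ∧ t 2 < t 0) ∨ (t 2 < t 0 ∧ t 0 < t 1)}

/-- `c` lies strictly between `a` and `b`. -/
def StrictBetween (a b c : ℚ) : Prop := (a < c ∧ c < b) ∨ (b < c ∧ c < a)

def SepS : Set (Fin 4 → ℚ) :=
  {t | Function.Injective t ∧
    Xor' (StrictBetween (t 0) (t 1) (t 2)) (StrictBetween (t 0) (t 1) (t 3))}

def T3S : Set (Fin 3 → ℚ) :=
  {t | (t 0 = t 1 ∧ t 1 < t 2) ∨ (t 0 = t 2 ∧ t 2 < t 1)}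

def NegT3S : Set (Fin 3 → ℚ) := {t | (fun i => -(t i)) ∈ T3S}

def DisS : Set (Fin 3 → ℚ) :=
  {t | (t 0 = t 1 ∧ t 1 ≠ t 2) ∨ (t 0 ≠ t 1 ∧ t 1 = t 2)}

/-- The binary valued relation `R_{α,β,γ}` on `ℚ`. -/
noncomputable def Rabc (a b c : WithTop ℚ) : VRel 2 :=
  fun t => if t 0 = t 1 then a else if t 0 < t 1 then b else c

/-- A lex-operation on `ℚ`. -/
def IsLex (l : ℚ → ℚ → ℚ) : Prop :=
  ∀ x x' y y' : ℚ, l x y < l x' y' ↔ (x < x' ∨ (x = x' ∧ y < y'))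

/-- The dual of a binary operation on `ℚ`. -/
def dualOp (g : ℚ → ℚ → ℚ) : ℚ → ℚ → ℚ := fun x y => -g (-x) (-y)

/-- Operations of `mx` type. -/
def IsMx (g : ℚ → ℚ → ℚ) : Prop :=
  ∃ ene eeq : ℚ → ℚ, StrictMono ene ∧ StrictMono eeq ∧
    (∀ x ε : ℚ, 0 < ε → ene x < eeq x ∧ eeq x < ene (x + ε)) ∧
    ∀ x y : ℚ, g x y = if x = y then eeq x else ene (min x y)

/-- Operations of `mi` type. -/
def IsMi (g : ℚ → ℚ → ℚ) : Prop :=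
  ∃ elt eeq egt : ℚ → ℚ, StrictMono elt ∧ StrictMono eeq ∧ StrictMono egt ∧
    (∀ x ε : ℚ, 0 < ε → eeq x < egt x ∧ egt x < elt x ∧ elt x < eeq (x + ε)) ∧
    ∀ x y : ℚ, g x y = if x < y then elt x else if x = y then eeq x else egt y

/-- Operations of `lele` type. -/
def IsLele (g : ℚ → ℚ → ℚ) : Prop :=
  ∃ eneg epos : ℚ → ℚ, StrictMono eneg ∧ StrictMono epos ∧
    (∀ x, eneg x < 0) ∧ (∀ x, 0 < epos x) ∧
    ∃ l, IsLex l ∧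
      ∀ x y : ℚ, g x y = if x ≤ 0 then l (eneg x) (eneg y) else l (epos y) (epos x)

/-- A binary operation preserves a crisp relation (given as a set of tuples). -/
def Pres2 (g : ℚ → ℚ → ℚ) {k : ℕ} (S : Set (Fin k → ℚ)) : Prop :=
  ∀ s t : Fin k → ℚ, s ∈ S → t ∈ S → (fun i => g (s i) (t i)) ∈ S

/-- The feasibility relation of a valued relation. -/
def FeasSet {k : ℕ} (R : VRel k) : Set (Fin k → ℚ) := {t | R t ≠ ⊤}

/-- The set of minimal-value feasible tuples of a valued relation. -/
def OptSet {k : ℕ} (R : VRel k) : Set (Fin k → ℚ) := {t | R t ≠ ⊤ ∧ ∀ s, R t ≤ R s}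

/-- `g` preserves every relation of the crisp structure `Γ̂`, consisting of `Feas(R)`
for `R ∈ Γ` and `Opt(R_σ)` for all minors `R_σ` of relations `R ∈ Γ`. -/
def PresHat (g : ℚ → ℚ → ℚ) (Γ : Set ((k : ℕ) × VRel k)) : Prop :=
  ∀ p ∈ Γ, Pres2 g (FeasSet p.2) ∧
    ∀ (n : ℕ) (σ : Fin p.1 → Fin n),
      Pres2 g (OptSet (fun x : Fin n → ℚ => p.2 (fun j => x (σ j))))

/-- `g` is min, max, of mx/mi/lele type, or the dual of an mx/mi/lele type operation. -/
def GoodOp (g : ℚ → ℚ → ℚ) : Prop :=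
  g = (fun x y => min x y) ∨ g = (fun x y => max x y) ∨ IsMx g ∨ IsMi g ∨ IsLele g ∨
    ∃ h, (IsMx h ∨ IsMi h ∨ IsLele h) ∧ g = dualOp h

/-- `g` is the constant-zero binary operation, min, max, or of mx/mi/lele type. -/
def BaseOp (g : ℚ → ℚ → ℚ) : Prop :=
  g = (fun _ _ => (0 : ℚ)) ∨ g = (fun x y => min x y) ∨ g = (fun x y => max x y) ∨
    IsMx g ∨ IsMi g ∨ IsLele g


/-! ### Homogeneity of the rational order -/

/-- A strictly increasing map on a finite set of rationals extends to an automorphism of the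
order `ℚ`. The points are added in increasing order: beyond the largest point treated so far, the
automorphism is rescaled linearly. -/
lemma exists_automorphism_extending (A : Finset ℚ) (g : ℚ → ℚ) (hg : StrictMonoOn g A) :
    ∃ α : ℚ → ℚ, Function.Bijective α ∧ StrictMono α ∧ ∀ a ∈ A, α a = g a := by
  induction A using Finset.induction_on_max with
  | empty => exact ⟨id, Function.bijective_id, strictMono_id, by simp⟩
  | insert a A hA ih =>
    obtain ⟨α, hb, hm, hα⟩ := ih (hg.mono (by simp))
    rcases A.eq_empty_or_nonempty with rfl | hne
    · refine ⟨fun x => x + (g a - a), ?_, fun x y h => by simpa using h, by simp⟩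
      exact (Equiv.addRight (g a - a)).bijective
    · obtain ⟨M, hM, hMmax⟩ := A.exists_max_image id hne
      have hMa : M < a := hA M hM
      set c := α M with hc
      have h1 : c < α a := hm hMa
      have h2 : c < g a := by
        rw [hc, hα M hM]; exact hg (by simp [hM]) (by simp) hMa
      set r := (g a - c) / (α a - c) with hr
      have hrpos : 0 < r := div_pos (by linarith) (by linarith)
      set β : ℚ → ℚ := fun y => if y ≤ c then y else c + (y - c) * r with hβ
      have hβm : StrictMono β := by
        intro x y hxy
        simp only [hβ]
        split_ifs with hx hy hy
        · exact hxy
        · have : 0 < (y - c) * r := mul_pos (by linarith) hrpos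
          linarith
        · linarith
        · have : (x - c) * r < (y - c) * r := mul_lt_mul_of_pos_right (by linarith) hrpos
          linarith
      have hβs : Function.Surjective β := by
        intro y
        by_cases hy : y ≤ c
        · exact ⟨y, by simp [hβ, hy]⟩
        · have hpos : 0 < (y - c) / r := div_pos (by linarith) hrpos
          refine ⟨c + (y - c) / r, ?_⟩
          have : ¬ (c + (y - c) / r ≤ c) := by linarith
          simp only [hβ, this, if_false]
          field_simp
          ring
      refine ⟨β ∘ α, Function.Bijective.comp ⟨hβm.injective, hβs⟩ hb, hβm.comp hm, ?_⟩
      intro x hx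
      rcases Finset.mem_insert.1 hx with rfl | hx
      · have : ¬ (α x ≤ c) := not_le.2 h1
        have h3 : α x - c ≠ 0 := by linarith
        simp only [Function.comp, hβ, this, if_false, hr]
        field_simp
        ring
      · have h3 : α x ≤ c := hm.monotone (hMmax x hx)
        simp only [Function.comp, hβ, h3, if_true]
        exact hα x hx

/-- Two tuples of the same order type lie in one orbit of the automorphism group of `ℚ`. -/
lemma exists_automorphism_of_orderType {k : ℕ} (s t : Fin k → ℚ)
    (h : ∀ i j, s i < s j ↔ t i < t j) :
    ∃ α : ℚ → ℚ, Function.Bijective α ∧ StrictMono α ∧ ∀ i, α (s i) = t i := by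
  have heq : ∀ i j, s i = s j → t i = t j := by
    intro i j hij
    have h1 := h i j
    have h2 := h j i
    simp only [hij, lt_irrefl, false_iff, not_lt] at h1 h2
    exact le_antisymm h2 h1
  let g : ℚ → ℚ := fun q => if hq : ∃ i, s i = q then t hq.choose else 0
  have hg : ∀ i, g (s i) = t i := by
    intro i
    have hq : ∃ j, s j = s i := ⟨i, rfl⟩
    simp only [g, hq, dite_true]
    exact heq _ _ hq.choose_spec
  obtain ⟨α, hb, hm, hα⟩ := exists_automorphism_extending (Finset.univ.image s) g (by
    intro x hx y hy hxy
    simp only [Finset.coe_image, Finset.coe_univ, Set.image_univ, Set.mem_range] at hx hy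
    obtain ⟨i, rfl⟩ := hx
    obtain ⟨j, rfl⟩ := hy
    rw [hg, hg]
    exact (h i j).1 hxy)
  exact ⟨α, hb, hm, fun i => by rw [hα _ (by simp), hg]⟩

lemma Temporal.eq_of_orderType {k : ℕ} {R : VRel k} (hR : Temporal R) (s t : Fin k → ℚ)
    (h : ∀ i j, s i < s j ↔ t i < t j) : R s = R t := by
  obtain ⟨α, hb, hm, hα⟩ := exists_automorphism_of_orderType s t h
  rw [← hR α hb hm s]
  simp [hα]

/-- There are finitely many order types of `k`-tuples, so a temporal valued relation takes finitely
many values. -/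
lemma Temporal.finite_range {k : ℕ} {R : VRel k} (hR : Temporal R) : (Set.range R).Finite := by
  let T : (Fin k → ℚ) → (Fin k → Fin k → Prop) := fun t i j => t i < t j
  have : R.FactorsThrough T := fun s t hst =>
    hR.eq_of_orderType s t fun i j => by
      have := congrFun (congrFun hst i) j
      simpa [T] using this
  refine (Set.finite_range (Function.extend T R fun _ => ⊤)).subset ?_
  rintro _ ⟨t, rfl⟩
  exact ⟨T t, this.extend_apply _ _⟩

/-- Every element of the clone is again temporal. -/
lemma Clone.temporal {Γ : Set ((k : ℕ) × VRel k)} (hT : ∀ p ∈ Γ, Temporal p.2) {k : ℕ}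
    {R : VRel k} (hR : Clone Γ R) : Temporal R := by
  induction hR with
  | base h => exact hT _ h
  | eqRel =>
    intro α hb hm t
    simp [crisp, hm.injective.eq_iff]
  | emptyRel => intro α hb hm t; simp [crisp]
  | sum σ _ ih =>
    intro α hb hm t
    exact Finset.sum_congr rfl fun i _ => ih i α hb hm (fun j => t (σ i j))
  | @proj k n R R' _ hglb ih =>
    intro α hb hm s
    have key : {v : WithTop ℚ | ∃ t : Fin n → ℚ, v = R (Fin.append (fun i => α (s i)) t)} =
        {v : WithTop ℚ | ∃ t : Fin n → ℚ, v = R (Fin.append s t)} := by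
      have h1 : ∀ t : Fin n → ℚ,
          R (Fin.append (fun i => α (s i)) (fun i => α (t i))) = R (Fin.append s t) := by
        intro t
        rw [← ih α hb hm (Fin.append s t)]
        congr 1
        funext i
        refine Fin.addCases (fun i => ?_) (fun i => ?_) i <;> simp
      ext v
      constructor
      · rintro ⟨t, rfl⟩
        choose β hβ using hb.2
        refine ⟨fun i => β (t i), ?_⟩
        rw [← h1]
        simp [hβ]
      · rintro ⟨t, rfl⟩
        exact ⟨fun i => α (t i), (h1 t).symm⟩
    have h2 := hglb (fun i => α (s i))
    rw [key] at h2
    exact h2.unique (hglb s)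
  | shift c _ ih => intro α hb hm t; simp only [ih α hb hm t]
  | scale q hq _ ih => intro α hb hm t; simp only [ih α hb hm t]
  | feas _ ih => intro α hb hm t; simp only [ih α hb hm t]
  | opt _ ih => intro α hb hm t; simp only [ih α hb hm t]

/-- Over any set of tuples, a temporal valued relation attains its infimum or is constantly `∞`. -/
lemma Temporal.exists_min {k : ℕ} {R : VRel k} (hR : Temporal R) (P : (Fin k → ℚ) → Prop) :
    ∃ a : WithTop ℚ, (∀ x, P x → a ≤ R x) ∧ (a = ⊤ ∨ ∃ x, P x ∧ R x = a) := by
  have hfin : (insert ⊤ (R '' {x | P x})).Finite :=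
    (hR.finite_range.subset (Set.image_subset_range _ _)).insert _
  obtain ⟨a, ha, hmin⟩ := Set.exists_min_image _ id hfin ⟨⊤, by simp⟩
  refine ⟨a, fun x hx => hmin _ (Or.inr ⟨x, hx, rfl⟩), ?_⟩
  rcases ha with rfl | ⟨x, hx, rfl⟩
  · exact Or.inl rfl
  · exact Or.inr ⟨x, hx, rfl⟩

/-! ### Closure properties of the clone -/

section Closure

variable {Γ : Set ((k : ℕ) × VRel k)}

lemma Clone.congr {k : ℕ} {R R' : VRel k} (h : Clone Γ R) (e : R = R') : Clone Γ R' := e ▸ h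

lemma Clone.minor {k n : ℕ} {R : VRel k} (h : Clone Γ R) (σ : Fin k → Fin n) :
    Clone Γ (fun x : Fin n → ℚ => R (fun j => x (σ j))) :=
  (Clone.sum (m := 1) (k := fun _ => k) (R := fun _ => R) (fun _ => σ) fun _ => h).congr
    (by funext x; simp)

lemma Clone.zero (n : ℕ) : Clone Γ (fun _ : Fin n → ℚ => (0 : WithTop ℚ)) :=
  (Clone.sum (m := 0) (n := n) (k := fun _ => 0) (R := fun _ _ => 0) (fun i => i.elim0)
    fun i => i.elim0).congr (by funext x; simp)

lemma Clone.add {n : ℕ} {R R' : VRel n} (h : Clone Γ R) (h' : Clone Γ R') :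
    Clone Γ (fun x => R x + R' x) :=
  (Clone.sum (m := 2) (n := n) (k := fun _ => n) (R := fun i => if i = 0 then R else R')
    (fun _ => id) fun i => by
      by_cases hi : i = 0
      · simpa [hi] using h
      · simpa [hi] using h').congr (by funext x; simp [Fin.sum_univ_two])

lemma Clone.finsetSum {n : ℕ} {ι : Type*} (s : Finset ι) (F : ι → VRel n)
    (h : ∀ i ∈ s, Clone Γ (F i)) : Clone Γ (fun x => ∑ i ∈ s, F i x) := by
  induction s using Finset.induction_on with
  | empty => simpa using Clone.zero n
  | insert a s ha ih =>
    simp only [Finset.sum_insert ha]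
    exact (h a (by simp)).add (ih fun i hi => h i (by simp [hi]))

/-- The predicate `P` on `n`-tuples is definable: as a crisp relation it belongs to the clone. -/
def Definable (Γ : Set ((k : ℕ) × VRel k)) {n : ℕ} (P : (Fin n → ℚ) → Prop) : Prop :=
  Clone Γ (fun x => if P x then 0 else ⊤)

/-- A valued relation of the clone may be restricted by a definable predicate. -/
lemma Clone.guard {n : ℕ} {R : VRel n} {P : (Fin n → ℚ) → Prop} (h : Clone Γ R)
    (hP : Definable Γ P) : Clone Γ (fun x => if P x then R x else ⊤) :=
  (h.add hP).congr (by funext x; split_ifs <;> simp)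

lemma Definable.and {n : ℕ} {P Q : (Fin n → ℚ) → Prop} (hP : Definable Γ P)
    (hQ : Definable Γ Q) : Definable Γ (fun x => P x ∧ Q x) :=
  (Clone.guard hQ hP).congr (by funext x; by_cases hp : P x <;> by_cases hq : Q x <;> simp [hp, hq])

lemma Definable.minor {k n : ℕ} {P : (Fin k → ℚ) → Prop} (hP : Definable Γ P)
    (σ : Fin k → Fin n) : Definable Γ (fun x : Fin n → ℚ => P (fun j => x (σ j))) :=
  Clone.minor hP σ

lemma Definable.forall {n : ℕ} {ι : Type*} (s : Finset ι) (P : ι → (Fin n → ℚ) → Prop)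
    (h : ∀ i ∈ s, Definable Γ (P i)) : Definable Γ (fun x => ∀ i ∈ s, P i x) := by
  induction s using Finset.induction_on with
  | empty => exact (Clone.zero n).congr (by simp)
  | insert a s ha ih =>
    simp only [Finset.forall_mem_insert]
    exact (h a (by simp)).and (ih fun i hi => h i (by simp [hi]))

lemma Definable.eq {n : ℕ} (i j : Fin n) : Definable Γ (fun x : Fin n → ℚ => x i = x j) :=
  (Clone.eqRel.minor ![i, j]).congr (by funext x; simp [crisp])

lemma Definable.lt (hlt : Clone Γ (crisp LtS)) {n : ℕ} (i j : Fin n) :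
    Definable Γ (fun x : Fin n → ℚ => x i < x j) :=
  (hlt.minor ![i, j]).congr (by funext x; simp [crisp, LtS])

/-- Projection to an arbitrary list `σ` of coordinates. -/
lemma Clone.projTo {n k : ℕ} {R : VRel n} (h : Clone Γ R) (σ : Fin k → Fin n) {R' : VRel k}
    (hglb : ∀ s, IsGLB {v : WithTop ℚ | ∃ x : Fin n → ℚ, (∀ i, x (σ i) = s i) ∧ v = R x} (R' s)) :
    Clone Γ R' := by
  have h1 : Clone Γ (fun z : Fin (k + n) → ℚ =>
      if ∀ i ∈ (Finset.univ : Finset (Fin k)),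
        z (Fin.natAdd k (σ i)) = z (Fin.castAdd n i) then R (fun j => z (Fin.natAdd k j)) else ⊤) := by
    convert (h.minor (Fin.natAdd k)).guard (Definable.forall Finset.univ
      (fun i (z : Fin (k + n) → ℚ) => z (Fin.natAdd k (σ i)) = z (Fin.castAdd n i))
      fun i _ => Definable.eq _ _)
  refine Clone.proj h1 fun s => ?_
  simp only [Finset.mem_univ, true_implies, Fin.append_right, Fin.append_left]
  constructor
  · rintro v ⟨x, rfl⟩
    split_ifs with hx
    · exact (hglb s).1 ⟨x, hx, rfl⟩
    · exact le_top
  · intro l hl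
    refine (hglb s).2 ?_
    rintro v ⟨x, hx, rfl⟩
    exact hl ⟨x, by rw [if_pos hx]⟩

lemma Definable.exists {n k : ℕ} {P : (Fin n → ℚ) → Prop} (h : Definable Γ P)
    (σ : Fin k → Fin n) : Definable Γ (fun s => ∃ x, (∀ i, x (σ i) = s i) ∧ P x) := by
  refine Clone.projTo h σ fun s => ?_
  split_ifs with hs
  · obtain ⟨x, hx, hP⟩ := hs
    refine ⟨?_, fun l hl => hl ⟨x, hx, by simp [hP]⟩⟩
    rintro v ⟨y, -, rfl⟩
    split_ifs <;> simp
  · refine ⟨?_, fun l _ => le_top⟩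
    rintro v ⟨y, hy, rfl⟩
    rw [if_neg fun hP => hs ⟨y, hy, hP⟩]

/-- The set of minimizers is definable; here it is recognized by the minimal value `m`. -/
lemma Clone.definable_of_min {n : ℕ} {R : VRel n} (h : Clone Γ R) (P : (Fin n → ℚ) → Prop)
    (m : WithTop ℚ) (hm : m ≠ ⊤) (hne : ∃ x, P x) (hP : ∀ x, P x → R x = m)
    (hnP : ∀ x, ¬ P x → m < R x) : Definable Γ P := by
  refine h.opt.congr ?_
  funext t
  have : (R t ≠ ⊤ ∧ ∀ s, R t ≤ R s) ↔ P t := by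
    constructor
    · rintro ⟨-, ht⟩
      by_contra hc
      obtain ⟨x, hx⟩ := hne
      exact absurd (ht x) (not_le.2 (by rw [hP x hx]; exact hnP t hc))
    · intro ht
      rw [hP t ht]
      refine ⟨hm, fun s => ?_⟩
      by_cases hs : P s
      · exact (hP s hs).ge
      · exact (hnP s hs).le
  simp only [this]

/-- The value of `Rabc a b c` on the pair `(p, q)`. -/
noncomputable def pairCost (a b c : WithTop ℚ) (p q : ℚ) : WithTop ℚ :=
  if p = q then a else if p < q then b else c

lemma Clone.rval {a b c : WithTop ℚ} (h : Clone Γ (Rabc a b c)) {n : ℕ} (i j : Fin n) :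
    Clone Γ (fun x : Fin n → ℚ => pairCost a b c (x i) (x j)) :=
  (h.minor ![i, j]).congr (by funext x; simp [Rabc, pairCost])

/-- Projection of a valued relation to two coordinates `i`, `j`: the values `a`, `b`, `c` are the
minima over the tuples with `x i = x j`, `x i < x j` and `x j < x i` respectively. -/
lemma Clone.exists_Rabc (hT : ∀ p ∈ Γ, Temporal p.2) {n : ℕ} {R : VRel n} (h : Clone Γ R)
    (i j : Fin n) : ∃ a b c, Clone Γ (Rabc a b c) ∧
      ((∀ x, x i = x j → a ≤ R x) ∧ (a = ⊤ ∨ ∃ x, x i = x j ∧ R x = a)) ∧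
      ((∀ x, x i < x j → b ≤ R x) ∧ (b = ⊤ ∨ ∃ x, x i < x j ∧ R x = b)) ∧
      ((∀ x, x j < x i → c ≤ R x) ∧ (c = ⊤ ∨ ∃ x, x j < x i ∧ R x = c)) := by
  have hR := h.temporal hT
  obtain ⟨a, ha⟩ := hR.exists_min fun x => x i = x j
  obtain ⟨b, hb⟩ := hR.exists_min fun x => x i < x j
  obtain ⟨c, hc⟩ := hR.exists_min fun x => x j < x i
  refine ⟨a, b, c, ?_, ha, hb, hc⟩
  -- a tuple attaining a minimum can be moved by an automorphism so that its entries `i`, `j` become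
  -- any prescribed pair of the same order type
  have move : ∀ (s : Fin 2 → ℚ) (x : Fin n → ℚ), (x i < x j ↔ s 0 < s 1) →
      (x j < x i ↔ s 1 < s 0) → ∃ y : Fin n → ℚ, (∀ l, y (![i, j] l) = s l) ∧ R x = R y := by
    intro s x h1 h2
    obtain ⟨α, hαb, hαm, hα⟩ := exists_automorphism_of_orderType ![x i, x j] s (by
      intro p q
      fin_cases p <;> fin_cases q <;> simp [h1, h2])
    refine ⟨fun l => α (x l), fun l => ?_, (hR α hαb hαm x).symm⟩
    have h0 := hα 0
    have h1 := hα 1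
    fin_cases l <;> simpa using by assumption
  refine h.projTo ![i, j] fun s => ?_
  simp only [Rabc]
  rcases lt_trichotomy (s 0) (s 1) with hs | hs | hs
  · rw [if_neg hs.ne, if_pos hs]
    refine ⟨?_, fun l hl => ?_⟩
    · rintro v ⟨x, hx, rfl⟩
      have h0 := hx 0
      have h1 := hx 1
      simp at h0 h1
      exact hb.1 x (by rw [h0, h1]; exact hs)
    · rcases hb.2 with rfl | ⟨x, hx, rfl⟩
      · exact le_top
      · obtain ⟨y, hy, e⟩ := move s x (iff_of_true hx hs) (iff_of_false hx.not_gt hs.not_gt)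
        exact hl ⟨y, hy, e⟩
  · rw [if_pos hs]
    refine ⟨?_, fun l hl => ?_⟩
    · rintro v ⟨x, hx, rfl⟩
      have h0 := hx 0
      have h1 := hx 1
      simp at h0 h1
      exact ha.1 x (by rw [h0, h1]; exact hs)
    · rcases ha.2 with rfl | ⟨x, hx, rfl⟩
      · exact le_top
      · obtain ⟨y, hy, e⟩ := move s x (by simp [hx, hs]) (by simp [hx, hs])
        exact hl ⟨y, hy, e⟩
  · rw [if_neg hs.ne', if_neg hs.not_gt]
    refine ⟨?_, fun l hl => ?_⟩
    · rintro v ⟨x, hx, rfl⟩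
      have h0 := hx 0
      have h1 := hx 1
      simp at h0 h1
      exact hc.1 x (by rw [h0, h1]; exact hs)
    · rcases hc.2 with rfl | ⟨x, hx, rfl⟩
      · exact le_top
      · obtain ⟨y, hy, e⟩ := move s x (iff_of_false hx.not_gt hs.not_gt) (iff_of_true hx hs)
        exact hl ⟨y, hy, e⟩

end Closure

/-! ### Relations forced by asymmetric binary costs -/

section Binary

variable {Γ : Set ((k : ℕ) × VRel k)}

lemma Clone.Rabc_swap {a b c : WithTop ℚ} (h : Clone Γ (Rabc a b c)) : Clone Γ (Rabc a c b) :=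
  (h.rval (n := 2) 1 0).congr (by
    funext x
    simp only [pairCost, Rabc]
    rcases lt_trichotomy (x 0) (x 1) with hx | hx | hx
    · simp [hx, hx.ne, hx.ne', hx.not_gt]
    · simp [hx]
    · simp [hx, hx.ne, hx.ne', hx.not_gt])

lemma Clone.Rabc_symm {a b c : WithTop ℚ} (h : Clone Γ (Rabc a b c)) :
    Clone Γ (Rabc (a + a) (b + c) (b + c)) :=
  (h.add h.Rabc_swap).congr (by
    funext x
    simp only [Rabc]
    split_ifs <;> simp [add_comm])

/-- If `b < c` and equality is expensive, the minimizers of the cost of an oriented triangle are the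
tuples of `Cyc`: one descent out of three is unavoidable, and equalities cost more than ascents. -/
lemma Clone.cyc_of_Rabc {a b c : WithTop ℚ} (h : Clone Γ (Rabc a b c)) (hbc : b < c) (hc : c ≠ ⊤)
    (hba : b < a) (h2 : b + c ≤ a + a) : Clone Γ (crisp CycS) := by
  have hR := ((h.rval (n := 3) 0 1).add (h.rval 1 2)).add (h.rval 2 0)
  lift c to ℚ using hc
  lift b to ℚ using hbc.ne_top
  have hcyc := hR.definable_of_min (fun x => x ∈ CycS) ((b : WithTop ℚ) + b + c)
    (by simp [← WithTop.coe_add]) ⟨![0, 1, 2], by simp [CycS]⟩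
  refine hcyc ?_ ?_
  · rintro x hx
    rcases hx with ⟨h1, h2⟩ | ⟨h1, h2⟩ | ⟨h1, h2⟩
    · simp [pairCost, h1, h2, h1.ne, h2.ne, (h1.trans h2).ne', (h1.trans h2).not_gt]
    · simp only [pairCost, h1, h2, h1.ne, h2.ne, (h1.trans h2).ne', (h1.trans h2).not_gt,
        if_true, if_false]
      norm_cast; ring
    · simp only [pairCost, h1, h2, h1.ne, h2.ne, (h1.trans h2).ne', (h1.trans h2).not_gt,
        if_true, if_false]
      norm_cast; ring
  · intro x hx
    simp only [CycS, Set.mem_ofPred_eq, not_or, not_and, not_lt] at hx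
    obtain ⟨h01, h12, h20⟩ := hx
    simp only [pairCost]
    induction a using WithTop.recTopCoe with
    | top =>
      have e : ∀ r : ℚ, (r : WithTop ℚ) < ⊤ := WithTop.coe_lt_top
      split_ifs <;> first
        | (exfalso; grind)
        | (norm_cast at *; grind)
        | (simp only [← WithTop.coe_add, top_add, add_top, e])
    | coe a =>
      norm_cast at *
      split_ifs <;> first
        | (exfalso; grind)
        | (norm_cast; linarith)

/-- With respect to a cost preferring equalities, the cheapest way to place a point `x l` relative to
two given points `x i < x j` is on one of these. -/
lemma Definable.mem_pair (hlt : Clone Γ (crisp LtS)) {c : WithTop ℚ} (h : Clone Γ (Rabc 0 1 c))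
    (hc : 1 ≤ c) {n : ℕ} (i j l : Fin n) :
    Definable Γ (fun x : Fin n → ℚ => x i < x j ∧ (x l = x i ∨ x l = x j)) := by
  have hR := ((h.rval (n := 3) 0 2).add (h.rval 2 1)).guard (Definable.lt hlt 0 1)
  refine (hR.definable_of_min (fun x => x 0 < x 1 ∧ (x 2 = x 0 ∨ x 2 = x 1)) 1 (by simp)
    ⟨![0, 1, 1], by simp⟩ ?_ ?_).minor ![i, j, l]
  · rintro x ⟨h1, h2 | h2⟩ <;> simp [pairCost, h1, h2, h1.ne]
  · intro x hx
    simp only [pairCost]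
    induction c using WithTop.recTopCoe with
    | top =>
      split_ifs <;> first
        | (exfalso; grind)
        | exact WithTop.coe_lt_top 1
        | exact_mod_cast (by norm_num : (1 : ℚ) < 1 + 1)
    | coe c =>
      norm_cast at *
      split_ifs <;> first
        | (exfalso; grind)
        | (norm_cast; linarith)
        | exact WithTop.coe_lt_top 1
        | exact_mod_cast (by norm_num : (1 : ℚ) < 1 + 1)

/-- The predicate of `Clone.betw_of_Rabc_normalized`: the entries `0`, `1`, `2` are terminals
`a < b < c`, and the entries `3`, …, `6` are `u ∈ {a, c}`, `y ∈ {a, b}`, `z ∈ {b, c}`,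
`w ∈ {a, c}`. -/
def Gadget (x : Fin 7 → ℚ) : Prop :=
  ((x 0 < x 2 ∧ (x 3 = x 0 ∨ x 3 = x 2)) ∧ (x 0 < x 1 ∧ (x 4 = x 0 ∨ x 4 = x 1))) ∧
    ((x 1 < x 2 ∧ (x 5 = x 1 ∨ x 5 = x 2)) ∧ (x 0 < x 2 ∧ (x 6 = x 0 ∨ x 6 = x 2)))

/-- The two optimal placements of `Gadget`. -/
def GadgetOpt (x : Fin 7 → ℚ) : Prop :=
  x 0 < x 1 ∧ x 1 < x 2 ∧
    ((x 3 = x 0 ∧ x 4 = x 0 ∧ x 5 = x 2 ∧ x 6 = x 2) ∨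
      (x 3 = x 2 ∧ x 4 = x 1 ∧ x 5 = x 1 ∧ x 6 = x 0))

/-- A cost preferring equalities behaves like a three-terminal cut. With terminals `a < b < c` the
weights below have exactly two optimal placements, and in them `(u, w)` is `(a, c)` or `(c, a)`:
the chain `u – y – z – w` transports the bit `u ∈ {a, c}` through `{a, b}` and `{b, c}` and returns
it negated. -/
lemma Clone.betw_of_Rabc_normalized (hlt : Clone Γ (crisp LtS)) {c : WithTop ℚ}
    (h : Clone Γ (Rabc 0 1 c)) (hc : 1 ≤ c) : Clone Γ (crisp BetwS) := by
  have hG : Definable Γ Gadget :=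
    ((Definable.mem_pair hlt h hc 0 2 3).and (Definable.mem_pair hlt h hc 0 1 4)).and
      ((Definable.mem_pair hlt h hc 1 2 5).and (Definable.mem_pair hlt h hc 0 2 6))
  have hR := ((((((((h.rval (n := 7) 4 3).add (h.rval 4 3)).add (h.rval 4 5)).add
    (h.rval 4 5)).add (h.rval 6 5)).add (h.rval 6 5)).add (h.rval 3 2)).add (h.rval 0 6)).guard hG
  have hopt : Definable Γ GadgetOpt := by
    refine hR.definable_of_min _ 4 (by simp) ⟨![0, 1, 2, 0, 0, 2, 2], by simp [GadgetOpt]⟩ ?_ ?_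
    · rintro x ⟨hab, hbc, ⟨hu, hy, hz, hw⟩ | ⟨hu, hy, hz, hw⟩⟩
      · have hg : Gadget x := by simp [Gadget, *, hab.trans hbc]
        have hac := hab.trans hbc
        simp [pairCost, *, hac.ne, one_add_one_eq_two]
        norm_num
      · have hg : Gadget x := by simp [Gadget, *, hab.trans hbc]
        have hac := hab.trans hbc
        simp [pairCost, *, hab.ne, hbc.ne]
        norm_num
    · intro x hx
      split_ifs with hg
      swap
      · exact WithTop.coe_lt_top 4
      obtain ⟨⟨⟨hac, hu⟩, hab, hy⟩, ⟨hbc, hz⟩, -, hw⟩ := hg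
      have hx' : ¬ ((x 3 = x 0 ∧ x 4 = x 0 ∧ x 5 = x 2 ∧ x 6 = x 2) ∨
        (x 3 = x 2 ∧ x 4 = x 1 ∧ x 5 = x 1 ∧ x 6 = x 0)) := fun hh => hx ⟨hab, hbc, hh⟩
      have e4 : (4 : WithTop ℚ) = ((4 : ℚ) : WithTop ℚ) := rfl
      have e1 : (1 : WithTop ℚ) = ((1 : ℚ) : WithTop ℚ) := rfl
      have e0 : (0 : WithTop ℚ) = ((0 : ℚ) : WithTop ℚ) := rfl
      rcases hu with hu | hu <;> rcases hy with hy | hy <;> rcases hz with hz | hz <;>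
        rcases hw with hw | hw <;>
        simp only [hu, hy, hz, hw, hab.ne, hbc.ne, hac.ne, hab.ne', hbc.ne', hac.ne', and_true,
          and_false, or_true, or_false, not_true] at hx' <;>
        simp only [pairCost, hu, hy, hz, hw, hab.ne, hbc.ne, hac.ne, hab.ne', hbc.ne',
          hab, hbc, hac, hab.not_gt, hbc.not_gt, if_true, if_false] <;>
        (induction c using WithTop.recTopCoe with
        | top => first
          | (simp only [top_add, add_top]; exact WithTop.coe_lt_top 4)
          | (rw [e4, e1, e0]; norm_cast)
        | coe c =>
          have hc' : 1 ≤ c := by exact_mod_cast hc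
          simp only [e4, e1, e0, ← WithTop.coe_add, WithTop.coe_lt_coe]; linarith)
  refine (hopt.exists ![3, 1, 6]).congr ?_
  funext s
  have : (∃ x : Fin 7 → ℚ, (∀ i, x (![3, 1, 6] i) = s i) ∧ GadgetOpt x) ↔ s ∈ BetwS := by
    constructor
    · rintro ⟨x, hx, hab, hbc, hh⟩
      have h0 : x 3 = s 0 := hx 0
      have h1 : x 1 = s 1 := hx 1
      have h2 : x 6 = s 2 := hx 2
      rcases hh with ⟨hu, -, -, hw⟩ | ⟨hu, -, -, hw⟩
      · left; rw [← h0, ← h1, ← h2, hu, hw]; exact ⟨hab, hbc⟩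
      · right; rw [← h0, ← h1, ← h2, hu, hw]; exact ⟨hab, hbc⟩
    · rintro (⟨h1, h2⟩ | ⟨h1, h2⟩)
      · refine ⟨![s 0, s 1, s 2, s 0, s 0, s 2, s 2], fun i => ?_, by simp [GadgetOpt, h1, h2]⟩
        fin_cases i <;> rfl
      · refine ⟨![s 2, s 1, s 0, s 0, s 1, s 1, s 2], fun i => ?_, by simp [GadgetOpt, h1, h2]⟩
        fin_cases i <;> rfl
  simp only [this, crisp]

/-- Shifting and scaling bring two distinct finite values `a < b` to `0 < 1`. -/
lemma Clone.normalize {n : ℕ} {R : VRel n} (h : Clone Γ R) {a b : ℚ} (hab : a < b) :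
    Clone Γ (fun x => ((1 / (b - a) : ℚ) : WithTop ℚ) * (R x + ((-a : ℚ) : WithTop ℚ))) :=
  (h.shift (-a)).scale _ (one_div_nonneg.2 (by linarith))

/-- If equality is strictly cheaper than both strict inequalities, normalization leads to the
three-terminal cut. -/
lemma Clone.betw_of_Rabc {a b c : WithTop ℚ} (h : Clone Γ (Rabc a b c))
    (hlt : Clone Γ (crisp LtS)) (hab : a < b) (hb : b ≠ ⊤) (hbc : b ≤ c) :
    Clone Γ (crisp BetwS) := by
  lift b to ℚ using hb
  lift a to ℚ using hab.ne_top
  have hab' : a < b := by exact_mod_cast hab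
  have hpos : 0 < b - a := by linarith
  have hn := h.normalize hab'
  set r : ℚ := 1 / (b - a) with hr
  have hr0 : 0 < r := one_div_pos.2 hpos
  have hrb : r * (b + -a) = 1 := by rw [hr]; field_simp; ring
  refine Clone.betw_of_Rabc_normalized hlt (c := (r : WithTop ℚ) * (c + ((-a : ℚ) : WithTop ℚ)))
    (hn.congr ?_) ?_
  · funext x
    simp only [Rabc]
    split_ifs
    · norm_cast; simp
    · norm_cast
    · rfl
  · induction c using WithTop.recTopCoe with
    | top =>
      rw [top_add, WithTop.mul_top (by exact_mod_cast hr0.ne')]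
      exact le_top
    | coe c =>
      have hbc' : b ≤ c := by exact_mod_cast hbc
      have : 1 ≤ r * (c + -a) := by
        rw [← hrb]
        exact mul_le_mul_of_nonneg_left (by linarith) hr0.le
      exact_mod_cast this

/-- A clone without `Betw` and `Cyc` has no binary cost with `c < b < ∞`. Symmetrizing the cost gives
equality the value `2a` and strict inequalities the value `b + c`, and the two cases are
distinguished by comparing these. -/
lemma Clone.hard_of_gt_lt {a b c : WithTop ℚ} (h : Clone Γ (Rabc a b c))
    (hlt : Clone Γ (crisp LtS)) (hcb : c < b) (hb : b ≠ ⊤) :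
    Clone Γ (crisp BetwS) ∨ Clone Γ (crisp CycS) := by
  lift b to ℚ using hb
  lift c to ℚ using hcb.ne_top
  rcases lt_or_ge (a + a) ((b : WithTop ℚ) + c) with h2 | h2
  · exact Or.inl (h.Rabc_symm.betw_of_Rabc hlt h2 (by simp [← WithTop.coe_add]) le_rfl)
  · refine Or.inr (h.Rabc_swap.cyc_of_Rabc hcb (by simp) ?_ (by rwa [add_comm]))
    induction a using WithTop.recTopCoe with
    | top => exact WithTop.coe_lt_top c
    | coe a => norm_cast at *; linarith

/-- A clone without `Betw` and `Cyc` has no binary cost with `a < b < ∞`. -/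
lemma Clone.hard_of_eq_lt {a b c : WithTop ℚ} (h : Clone Γ (Rabc a b c))
    (hlt : Clone Γ (crisp LtS)) (hab : a < b) (hb : b ≠ ⊤) :
    Clone Γ (crisp BetwS) ∨ Clone Γ (crisp CycS) := by
  rcases le_or_gt b c with hbc | hcb
  · exact Or.inl (h.betw_of_Rabc hlt hab hb hbc)
  · exact h.hard_of_gt_lt hlt hcb hb

end Binary

/-! ### Refining tuples without increasing the cost -/

section Refine

variable {Γ : Set ((k : ℕ) × VRel k)}

/-- `⟨Γ⟩` contains `Betw` or `Cyc`. The other four relations of the theorem are never needed. -/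
def Hard (Γ : Set ((k : ℕ) × VRel k)) : Prop :=
  Clone Γ (crisp BetwS) ∨ Clone Γ (crisp CycS)

/-- If a feasible tuple satisfies `x i < x j`, then this inequality can be imposed for free. -/
lemma Clone.step_lt {n : ℕ} {R : VRel n} (h : Clone Γ R)
    (hT : ∀ p ∈ Γ, Temporal p.2) (hlt : Clone Γ (crisp LtS)) (hh : ¬ Hard Γ)
    {x : Fin n → ℚ} (hx : R x ≠ ⊤) {i j : Fin n}
    (hij : x i < x j) (y : Fin n → ℚ) : ∃ z, z i < z j ∧ R z ≤ R y := by
  obtain ⟨a, b, c, hR, ⟨ha, -⟩, ⟨hb, hb'⟩, ⟨hc, -⟩⟩ := h.exists_Rabc hT i j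
  have hbt : b ≠ ⊤ := ((hb x hij).trans_lt hx.lt_top).ne
  obtain ⟨z, hz, rfl⟩ := hb'.resolve_left hbt
  refine ⟨z, hz, ?_⟩
  by_contra! hlt'
  apply hh
  rcases lt_trichotomy (y i) (y j) with hy | hy | hy
  · exact absurd (hb y hy) hlt'.not_ge
  · exact hR.hard_of_eq_lt hlt ((ha y hy).trans_lt hlt') hbt
  · exact hR.hard_of_gt_lt hlt ((hc y hy).trans_lt hlt') hbt

/-- Definable predicates which can be imposed for free one at a time can be imposed for free
simultaneously, provided that they hold jointly in a feasible tuple `t`. -/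
lemma Clone.follow {n : ℕ} {ι : Type*} {R : VRel n} (h : Clone Γ R) {t : Fin n → ℚ} (ht : R t ≠ ⊤)
    (s : Finset ι) (P : ι → (Fin n → ℚ) → Prop) (hP : ∀ i ∈ s, Definable Γ (P i))
    (hPt : ∀ i ∈ s, P i t)
    (step : ∀ i ∈ s, ∀ Φ : VRel n, Clone Γ Φ → Φ t ≠ ⊤ → ∀ y, ∃ z, P i z ∧ Φ z ≤ Φ y)
    (y : Fin n → ℚ) : ∃ u, R u ≤ R y ∧ ∀ i ∈ s, P i u := by
  by_cases hy : R y = ⊤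
  · exact ⟨t, by simp [hy], hPt⟩
  induction s using Finset.induction_on with
  | empty => exact ⟨y, le_rfl, by simp⟩
  | insert a s ha ih =>
    simp only [Finset.forall_mem_insert] at hP hPt step ⊢
    obtain ⟨u, huy, hu⟩ := ih hP.2 hPt.2 step.2
    obtain ⟨z, hz, hzu⟩ := step.1 _ (h.guard (Definable.forall s P hP.2))
      (by rw [if_pos hPt.2]; exact ht) u
    rw [if_pos hu] at hzu
    split_ifs at hzu with hg
    · exact ⟨z, hzu.trans huy, hz, hg⟩
    · exact absurd (top_le_iff.1 (hzu.trans huy)) hy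

/-- All the strict inequalities of a feasible tuple `t` can be imposed for free. -/
lemma Clone.refine {n : ℕ} {R : VRel n} (h : Clone Γ R)
    (hT : ∀ p ∈ Γ, Temporal p.2) (hlt : Clone Γ (crisp LtS)) (hh : ¬ Hard Γ)
    {t : Fin n → ℚ} (ht : R t ≠ ⊤) (y : Fin n → ℚ) :
    ∃ u, R u ≤ R y ∧ ∀ i j, t i < t j → u i < u j := by
  obtain ⟨u, hu, hu'⟩ := h.follow ht (Finset.univ.filter fun p : Fin n × Fin n => t p.1 < t p.2)
    (fun p x => x p.1 < x p.2) (fun p _ => Definable.lt hlt _ _) (by simp)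
    (fun p hp Φ hΦ hΦt y => hΦ.step_lt hT hlt hh hΦt (by simpa using hp) y) y
  exact ⟨u, hu, fun i j hij => hu' (i, j) (by simpa using hij)⟩

/-- A binary cost that penalizes equality can be normalized to `Rabc 1 0 0` or `Rabc 1 0 ⊤`. -/
lemma Clone.soft_of_Rabc {a b c : WithTop ℚ} (h : Clone Γ (Rabc a b c))
    (hlt : Clone Γ (crisp LtS)) (hh : ¬ Hard Γ) (hba : b < a) (ha : a ≠ ⊤) :
    ∃ γ : WithTop ℚ, (γ = 0 ∨ γ = ⊤) ∧ Clone Γ (Rabc 1 0 γ) := by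
  lift a to ℚ using ha
  lift b to ℚ using hba.ne_top
  have hba' : b < a := by exact_mod_cast hba
  have hpos : 0 < a - b := by linarith
  have hn := h.normalize hba'
  set r : ℚ := 1 / (a - b) with hr
  have hr0 : 0 < r := one_div_pos.2 hpos
  have hra : r * (a + -b) = 1 := by rw [hr]; field_simp; ring
  have hra' : (r : WithTop ℚ) * ((a : WithTop ℚ) + ((-b : ℚ) : WithTop ℚ)) = 1 := by
    exact_mod_cast hra
  have hrb' : (r : WithTop ℚ) * ((b : WithTop ℚ) + ((-b : ℚ) : WithTop ℚ)) = 0 := by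
    rw [← WithTop.coe_add, add_neg_cancel]; simp
  by_cases hc : c = ⊤
  · subst hc
    refine ⟨⊤, Or.inr rfl, hn.congr ?_⟩
    funext x
    simp only [Rabc]
    split_ifs
    · exact hra'
    · exact hrb'
    · rw [top_add, WithTop.mul_top (by exact_mod_cast hr0.ne')]
  · have hcb : c = b := by
      rcases lt_trichotomy c b with hcb | hcb | hcb
      · exact absurd (h.hard_of_gt_lt hlt hcb (by simp)) hh
      · exact hcb
      · exact absurd (h.Rabc_swap.hard_of_gt_lt hlt hcb hc) hh
    subst hcb
    refine ⟨0, Or.inl rfl, hn.congr ?_⟩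
    funext x
    simp only [Rabc]
    split_ifs
    · exact hra'
    · exact hrb'
    · exact hrb'

/-- If equality were never penalized, then equalities, like strict inequalities, could be imposed
for free, so that any tuple `s` could be moved to the order type of a given feasible `t` without
increasing the cost. -/
lemma Clone.exists_soft {n : ℕ} {R : VRel n} (h : Clone Γ R)
    (hT : ∀ p ∈ Γ, Temporal p.2) (hlt : Clone Γ (crisp LtS)) (hh : ¬ Hard Γ)
    {s t : Fin n → ℚ} (hst : R s < R t) (ht : R t ≠ ⊤) :
    ∃ γ : WithTop ℚ, (γ = 0 ∨ γ = ⊤) ∧ Clone Γ (Rabc 1 0 γ) := by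
  by_contra hno
  have step : ∀ (i j : Fin n), t i = t j → ∀ Φ : VRel n, Clone Γ Φ → Φ t ≠ ⊤ → ∀ y,
      ∃ z, z i = z j ∧ Φ z ≤ Φ y := by
    intro i j hij Φ hΦ hΦt y
    obtain ⟨a, b, c, hR, ⟨ha, ha'⟩, ⟨hb, -⟩, ⟨hc, -⟩⟩ := hΦ.exists_Rabc hT i j
    have hat : a ≠ ⊤ := ((ha t hij).trans_lt hΦt.lt_top).ne
    obtain ⟨z, hz, rfl⟩ := ha'.resolve_left hat
    refine ⟨z, hz, ?_⟩
    by_contra! hlt'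
    apply hno
    rcases lt_trichotomy (y i) (y j) with hy | hy | hy
    · exact hR.soft_of_Rabc hlt hh ((hb y hy).trans_lt hlt') hat
    · exact absurd (ha y hy) hlt'.not_ge
    · exact hR.Rabc_swap.soft_of_Rabc hlt hh ((hc y hy).trans_lt hlt') hat
  let L : Finset (Fin n × Fin n) := Finset.univ.filter fun p => t p.1 < t p.2
  let E : Finset (Fin n × Fin n) := Finset.univ.filter fun p => t p.1 = t p.2
  obtain ⟨u, hus, hu⟩ := h.refine hT hlt hh ht s
  have hL : Definable Γ fun x : Fin n → ℚ => ∀ p ∈ L, x p.1 < x p.2 :=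
    Definable.forall L (fun p x => x p.1 < x p.2) fun p _ => Definable.lt hlt _ _
  obtain ⟨v, hvu, hv⟩ := (h.guard hL).follow (t := t)
    (by rw [if_pos (by simp [L])]; exact ht) E
    (fun p x => x p.1 = x p.2) (fun p _ => Definable.eq _ _) (by simp [E])
    (fun p hp => step _ _ (by simpa [E] using hp)) u
  rw [if_pos (fun p hp => hu _ _ (by simpa [L] using hp))] at hvu
  have hvs := hvu.trans hus
  split_ifs at hvs with hg
  · refine absurd hst (not_lt.2 ?_)
    rw [h.temporal hT |>.eq_of_orderType t v fun i j => ?_]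
    · exact hvs
    · have h1 : ∀ i j, t i < t j → v i < v j := fun i j hij => hg (i, j) (by simpa [L] using hij)
      refine ⟨h1 i j, fun hij => ?_⟩
      by_contra! hji
      rcases hji.lt_or_eq with hji | hji
      · exact absurd (h1 _ _ hji) hij.not_gt
      · exact absurd (hv (j, i) (by simpa [E] using hji)) hij.ne'
  · exact absurd (top_le_iff.1 hvs) (hst.trans_le le_top).ne

/-- Feasible tuples `s`, `t` of a crisp relation can be merged: the result refines the order of `s`,
keeps the common equalities, and on a set `P` of pairs at which the cost `Rabc 1 0 γ` is minimal
for `t` and finite for `s`, this cost is minimal for the merged tuple as well. -/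
lemma Clone.merge {n : ℕ} {R : VRel n} (h : Clone Γ R)
    (hT : ∀ p ∈ Γ, Temporal p.2) (hlt : Clone Γ (crisp LtS)) (hh : ¬ Hard Γ)
    {γ : WithTop ℚ} (hγ : 0 ≤ γ) (hsoft : Clone Γ (Rabc 1 0 γ)) (hR : ∀ x, 0 ≤ R x)
    {s t : Fin n → ℚ} (hs : R s = 0) (ht : R t = 0)
    (P : Finset (Fin n × Fin n)) (hPt : ∀ p ∈ P, pairCost 1 0 γ (t p.1) (t p.2) = 0)
    (hPs : ∀ p ∈ P, pairCost 1 0 γ (s p.1) (s p.2) ≠ ⊤) :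
    ∃ u, R u = 0 ∧ (∀ i j, s i < s j → u i < u j) ∧ (∀ i j, s i = s j → t i = t j → u i = u j) ∧
      ∀ p ∈ P, pairCost 1 0 γ (u p.1) (u p.2) = 0 := by
  let E : Finset (Fin n × Fin n) := Finset.univ.filter fun p => s p.1 = s p.2 ∧ t p.1 = t p.2
  have hE : Definable Γ fun x : Fin n → ℚ => ∀ p ∈ E, x p.1 = x p.2 :=
    Definable.forall E (fun p x => x p.1 = x p.2) fun p _ => Definable.eq _ _
  have hΦ := (h.add (Clone.finsetSum P _ fun p _ => hsoft.rval p.1 p.2)).guard hE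
  obtain ⟨u, hut, hu⟩ := hΦ.refine hT hlt hh (t := s) (by
    rw [if_pos (by simp +contextual [E]), hs, zero_add]
    exact (WithTop.sum_lt_top.2 fun p hp => (hPs p hp).lt_top).ne) t
  rw [if_pos (c := ∀ p ∈ E, t p.1 = t p.2) (by simp +contextual [E]), ht, zero_add,
    Finset.sum_eq_zero hPt] at hut
  have hnn : ∀ p ∈ P, 0 ≤ pairCost 1 0 γ (u p.1) (u p.2) := by
    intro p _
    unfold pairCost
    split_ifs
    · exact zero_le_one
    · exact le_rfl
    · exact hγ
  split_ifs at hut with hg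
  · have h0 := (add_eq_zero_iff_of_nonneg (hR u) (Finset.sum_nonneg hnn)).1
      (le_antisymm hut (add_nonneg (hR u) (Finset.sum_nonneg hnn)))
    exact ⟨u, h0.1, hu, fun i j h1 h2 => hg (i, j) (by simp [E, h1, h2]),
      (Finset.sum_eq_zero_iff_of_nonneg hnn).1 h0.2⟩
  · exact absurd hut (by simp)

/-- Recognizing the order type of `ℓ(s, t)` for a lex-operation `ℓ`. -/
lemma Temporal.eq_zero_of_lex {n : ℕ} {R : VRel n} (hR : Temporal R) {l : ℚ → ℚ → ℚ} (hl : IsLex l)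
    {s t u : Fin n → ℚ} (hu : R u = 0) (h1 : ∀ i j, s i < s j → u i < u j)
    (h2 : ∀ i j, s i = s j → t i = t j → u i = u j)
    (h3 : ∀ i j, s i = s j → t i < t j → u i < u j) : R (fun i => l (s i) (t i)) = 0 := by
  rw [hR.eq_of_orderType _ u fun i j => ?_, hu]
  rw [hl]
  constructor
  · rintro (h | ⟨h, h'⟩)
    · exact h1 i j h
    · exact h3 i j h h'
  · intro h
    rcases lt_trichotomy (s i) (s j) with hs | hs | hs
    · exact Or.inl hs
    · rcases lt_trichotomy (t i) (t j) with ht | ht | ht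
      · exact Or.inr ⟨hs, ht⟩
      · exact absurd (h2 i j hs ht) h.ne
      · exact absurd (h3 j i hs.symm ht) h.not_gt
    · exact absurd (h1 j i hs) h.not_gt

end Refine

/-! ### Uniform subsequences for finitely many functions -/

section Ramsey

/-- The Erdős–Szekeres theorem with a weak bound. -/
lemma exists_strictMonoOn_or_strictAntiOn {α : Type*} [LinearOrder α] (f : α → ℚ) (N : ℕ) :
    ∀ (m n : ℕ) (B : Finset α), m + n = N → Set.InjOn f B → 2 ^ N ≤ B.card →
      (∃ C ⊆ B, C.card = m ∧ StrictMonoOn f C) ∨ (∃ C ⊆ B, C.card = n ∧ StrictAntiOn f C) := by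
  induction N with
  | zero =>
    intro m n B hN _ _
    exact Or.inl ⟨∅, by simp, by simp; lia, by simp [StrictMonoOn]⟩
  | succ N ih =>
    intro m n B hN hf hB
    rcases m with _ | m
    · exact Or.inl ⟨∅, by simp [StrictMonoOn]⟩
    rcases n with _ | n
    · exact Or.inr ⟨∅, by simp [StrictAntiOn]⟩
    have hne : B.Nonempty := Finset.card_pos.1 (lt_of_lt_of_le (by positivity) hB)
    set x := B.min' hne with hx
    have hxB : x ∈ B := B.min'_mem hne
    let U := (B.erase x).filter fun y => f x < f y
    let D := (B.erase x).filter fun y => ¬ f x < f y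
    have hcard : U.card + D.card = B.card - 1 := by
      rw [Finset.card_filter_add_card_filter_not, Finset.card_erase_of_mem hxB]
    have hUB : U ⊆ B := (Finset.filter_subset _ _).trans (Finset.erase_subset _ _)
    have hDB : D ⊆ B := (Finset.filter_subset _ _).trans (Finset.erase_subset _ _)
    have hmin : ∀ y ∈ B.erase x, x < y := fun y hy =>
      lt_of_le_of_ne (B.min'_le y (Finset.mem_of_mem_erase hy)) (Finset.ne_of_mem_erase hy).symm
    have hUx : ∀ y ∈ U, x < y ∧ f x < f y := fun y hy =>
      ⟨hmin y (Finset.mem_filter.1 hy).1, (Finset.mem_filter.1 hy).2⟩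
    have hDx : ∀ y ∈ D, x < y ∧ f y < f x := fun y hy => by
      have h1 := hmin y (Finset.mem_filter.1 hy).1
      refine ⟨h1, lt_of_le_of_ne (not_lt.1 (Finset.mem_filter.1 hy).2) fun h => ?_⟩
      exact h1.ne' (hf (hDB hy) hxB h)
    rw [pow_succ] at hB
    rcases le_or_gt (2 ^ N) U.card with hU | hU
    · rcases ih m (n + 1) U (by lia) (hf.mono hUB) hU with ⟨C, hC, hm, hC'⟩ | ⟨C, hC, hn, hC'⟩
      · have hxC : x ∉ C := fun h => (hUx x (hC h)).1.false
        refine Or.inl ⟨insert x C, Finset.insert_subset hxB (hC.trans hUB),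
          by rw [Finset.card_insert_of_notMem hxC, hm], ?_⟩
        intro y hy z hz hyz
        rw [Finset.coe_insert, Set.mem_insert_iff] at hy hz
        rcases hy with rfl | hy <;> rcases hz with rfl | hz
        · exact absurd hyz (lt_irrefl _)
        · exact (hUx z (hC hz)).2
        · exact absurd hyz (hUx y (hC hy)).1.not_gt
        · exact hC' hy hz hyz
      · exact Or.inr ⟨C, hC.trans hUB, hn, hC'⟩
    · have hD : 2 ^ N ≤ D.card := by lia
      rcases ih (m + 1) n D (by lia) (hf.mono hDB) hD with ⟨C, hC, hm, hC'⟩ | ⟨C, hC, hn, hC'⟩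
      · exact Or.inl ⟨C, hC.trans hDB, hm, hC'⟩
      · have hxC : x ∉ C := fun h => (hDx x (hC h)).1.false
        refine Or.inr ⟨insert x C, Finset.insert_subset hxB (hC.trans hDB),
          by rw [Finset.card_insert_of_notMem hxC, hn], ?_⟩
        intro y hy z hz hyz
        rw [Finset.coe_insert, Set.mem_insert_iff] at hy hz
        rcases hy with rfl | hy <;> rcases hz with rfl | hz
        · exact absurd hyz (lt_irrefl _)
        · exact (hDx z (hC hz)).2
        · exact absurd hyz (hDx y (hC hy)).1.not_gt
        · exact hC' hy hz hyz

/-- Ramsey's theorem for `k` injective functions: on a large finite linear order they have a common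
subset of size `n` on which each of them is strictly increasing or strictly decreasing. -/
lemma exists_uniform (k n : ℕ) : ∃ N : ℕ, ∀ {α : Type} [LinearOrder α] (B : Finset α),
    N ≤ B.card → ∀ g : Fin k → α → ℚ, (∀ i, Set.InjOn (g i) B) →
      ∃ C ⊆ B, C.card = n ∧ ∀ i, StrictMonoOn (g i) C ∨ StrictAntiOn (g i) C := by
  induction k with
  | zero =>
    refine ⟨n, fun B hB g _ => ?_⟩
    obtain ⟨C, hC, hn⟩ := Finset.exists_subset_card_eq hB
    exact ⟨C, hC, hn, fun i => i.elim0⟩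
  | succ k ih =>
    obtain ⟨N, hN⟩ := ih
    refine ⟨2 ^ (N + N), fun {α} _ B hB g hg => ?_⟩
    have key : ∃ C ⊆ B, C.card = N ∧ (StrictMonoOn (g 0) C ∨ StrictAntiOn (g 0) C) := by
      rcases exists_strictMonoOn_or_strictAntiOn (g 0) (N + N) N N B rfl (hg 0) hB with
        ⟨C, h1, h2, h3⟩ | ⟨C, h1, h2, h3⟩
      · exact ⟨C, h1, h2, Or.inl h3⟩
      · exact ⟨C, h1, h2, Or.inr h3⟩
    obtain ⟨C, hCB, hCN, hC⟩ := key
    obtain ⟨C', hC'C, hn, hC'⟩ := hN C hCN.ge (fun i => g i.succ) fun i => (hg _).mono hCB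
    refine ⟨C', hC'C.trans hCB, hn, Fin.cases ?_ hC'⟩
    exact hC.imp (fun h => h.mono hC'C) fun h => h.mono hC'C

/-- The rank of the entry `t i` among the entries of `t`. -/
noncomputable def rank {k : ℕ} (t : Fin k → ℚ) (i : Fin k) : Fin k :=
  ⟨(Finset.univ.filter fun j => t j < t i).card, by
    have h : (Finset.univ.filter fun j => t j < t i) ⊂ Finset.univ :=
      Finset.filter_ssubset.2 ⟨i, by simp⟩
    simpa using Finset.card_lt_card h⟩

lemma rank_lt_rank {k : ℕ} {t : Fin k → ℚ} {i j : Fin k} (h : t i < t j) : rank t i < rank t j := by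
  rw [Fin.lt_def]
  have hs : (Finset.univ.filter fun l => t l < t i) ⊂ Finset.univ.filter fun l => t l < t j := by
    refine (Finset.ssubset_iff_of_subset ?_).2 ⟨i, by simp [h]⟩
    intro l hl
    simp only [Finset.mem_filter, Finset.mem_univ, true_and] at hl ⊢
    exact hl.trans h
  exact Finset.card_lt_card hs

lemma rank_congr {k : ℕ} {t : Fin k → ℚ} {i j : Fin k} (h : t i = t j) : rank t i = rank t j := by
  simp [rank, h]

lemma rank_lt_rank_iff {k : ℕ} {t : Fin k → ℚ} {i j : Fin k} :
    rank t i < rank t j ↔ t i < t j := by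
  refine ⟨fun h => ?_, rank_lt_rank⟩
  by_contra! hc
  rcases hc.lt_or_eq with hc | hc
  · exact absurd (rank_lt_rank hc) h.not_gt
  · exact absurd (rank_congr hc) h.ne'

end Ramsey

/-! ### Lex-closure from a soft disequality -/

section Lex

variable {Γ : Set ((k : ℕ) × VRel k)}

/-- If strict inequalities themselves are soft constraints, `merge` produces the order type of
`ℓ(s, t)` at once. -/
lemma Clone.lex_of_top {n : ℕ} {R : VRel n} (h : Clone Γ R)
    (hT : ∀ p ∈ Γ, Temporal p.2) (hlt : Clone Γ (crisp LtS)) (hh : ¬ Hard Γ)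
    (hsoft : Clone Γ (Rabc 1 0 ⊤)) (hR : ∀ x, 0 ≤ R x)
    {s t : Fin n → ℚ} (hs : R s = 0) (ht : R t = 0) {l : ℚ → ℚ → ℚ} (hl : IsLex l) :
    R (fun i => l (s i) (t i)) = 0 := by
  obtain ⟨u, hu, h1, h2, h3⟩ := h.merge hT hlt hh le_top hsoft hR hs ht
    (Finset.univ.filter fun p => s p.1 = s p.2 ∧ t p.1 < t p.2)
    (by
      intro p hp
      have := (Finset.mem_filter.1 hp).2.2
      simp [pairCost, this, this.ne])
    (by
      intro p hp
      have := (Finset.mem_filter.1 hp).2.1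
      simp [pairCost, this])
  refine (h.temporal hT).eq_zero_of_lex hl hu h1 h2 fun i j hs ht => ?_
  have := h3 (i, j) (by simp [hs, ht])
  by_contra hc
  simp only [pairCost, if_neg hc] at this
  split_ifs at this <;> simp at this

/-- A grid of points: the rows are indexed by the coordinates of `R`, the order of the rows is the
order of `s`, rows with equal entries in `s` coincide, and choosing columns according to a tuple of
`R` yields a tuple of `R`. -/
lemma Clone.exists_grid {k : ℕ} {R : VRel k} (h : Clone Γ R)
    (hT : ∀ p ∈ Γ, Temporal p.2) (hlt : Clone Γ (crisp LtS)) (hh : ¬ Hard Γ)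
    (hsoft : Clone Γ (Rabc 1 0 0)) (hR : ∀ x, 0 ≤ R x)
    {s : Fin k → ℚ} (hs : R s = 0) (N : ℕ) :
    ∃ F : Fin k → Fin N → ℚ,
      (∀ τ : Fin k → Fin N, R (fun i => ((τ i : ℕ) : ℚ)) = 0 → R (fun i => F i (τ i)) = 0) ∧
      (∀ i j b b', s i < s j → F i b < F j b') ∧ (∀ i j, s i = s j → F i = F j) ∧
      ∀ i, Function.Injective (F i) := by
  -- the sum of the constraints `R` over all admissible choices of columns is satisfied by the grid
  -- `s'` with constant rows and by the grid `t'` with rows `0, 1, …, N - 1`; these two are merged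
  let e : Fin k × Fin N ≃ Fin (k * N) := finProdFinEquiv
  let T : Finset (Fin k → Fin N) := Finset.univ.filter fun τ => R (fun i => ((τ i : ℕ) : ℚ)) = 0
  have hS : Clone Γ (fun x : Fin (k * N) → ℚ => ∑ τ ∈ T, R (fun i => x (e (i, τ i)))) :=
    Clone.finsetSum T _ fun τ _ => h.minor fun i => e (i, τ i)
  let s' : Fin (k * N) → ℚ := fun p => s (e.symm p).1
  let t' : Fin (k * N) → ℚ := fun p => (((e.symm p).2 : ℕ) : ℚ)
  obtain ⟨u, hu, h1, h2, h3⟩ := hS.merge hT hlt hh le_rfl hsoft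
    (fun x => Finset.sum_nonneg fun τ _ => hR _) (s := s') (t := t')
    (by simp [s', hs]) (Finset.sum_eq_zero fun τ hτ => by simpa [t', T] using hτ)
    (Finset.univ.filter fun p => t' p.1 ≠ t' p.2)
    (by
      intro p hp
      simp [pairCost, (Finset.mem_filter.1 hp).2])
    (by
      intro p hp
      unfold pairCost
      split_ifs <;> simp)
  refine ⟨fun i b => u (e (i, b)), fun τ hτ => ?_, fun i j b b' hij => ?_, fun i j hij => ?_,
    fun i b b' hbb => ?_⟩
  · exact (Finset.sum_eq_zero_iff_of_nonneg fun τ _ => hR _).1 hu τ (by simpa [T] using hτ)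
  · exact h1 _ _ (by simpa [s'] using hij)
  · funext b
    exact h2 _ _ (by simpa [s'] using hij) (by simp [t'])
  · by_contra hne
    have := h3 (e (i, b), e (i, b')) (by simpa [t', Fin.val_inj] using hne)
    simp only [pairCost] at this
    rw [if_pos hbb] at this
    exact one_ne_zero this

/-- By Ramsey's theorem the rows of a grid may be taken monotone, increasing or decreasing. Choosing
columns according to `t` orders each class of equal entries of `s` as `t` or as the reverse of `t`;
choosing columns according to the resulting tuple orders every class as `t`. -/
lemma Clone.lex_of_zero {n : ℕ} {R : VRel n} (h : Clone Γ R)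
    (hT : ∀ p ∈ Γ, Temporal p.2) (hlt : Clone Γ (crisp LtS)) (hh : ¬ Hard Γ)
    (hsoft : Clone Γ (Rabc 1 0 0)) (hR : ∀ x, 0 ≤ R x)
    {s t : Fin n → ℚ} (hs : R s = 0) (ht : R t = 0) {l : ℚ → ℚ → ℚ} (hl : IsLex l) :
    R (fun i => l (s i) (t i)) = 0 := by
  obtain ⟨N, hN⟩ := exists_uniform n n
  obtain ⟨F, hF, hFlt, hFeq, hFinj⟩ := h.exists_grid hT hlt hh hsoft hR hs N
  obtain ⟨C, -, hCn, hC⟩ := hN (Finset.univ : Finset (Fin N)) (by simp) F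
    fun i => (hFinj i).injOn
  let e : Fin n ↪o Fin N := C.orderEmbOfFin hCn
  have heC : ∀ b, e b ∈ C := C.orderEmbOfFin_mem hCn
  have htemp := h.temporal hT
  let G : (Fin n → ℚ) → Fin n → ℚ := fun w i => F i (e (rank w i))
  have hG : ∀ w, R w = 0 → R (G w) = 0 := fun w hw => by
    refine hF (fun i => e (rank w i)) ?_
    rw [← htemp.eq_of_orderType w _ fun i j => ?_, hw]
    rw [Nat.cast_lt, Fin.val_fin_lt, e.lt_iff_lt, rank_lt_rank_iff]
  refine htemp.eq_zero_of_lex hl (hG _ (hG _ ht)) (fun i j hij => hFlt _ _ _ _ hij) ?_ ?_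
  · intro i j hsij htij
    have h1 : G t i = G t j := by simp only [G, hFeq i j hsij, rank_congr htij]
    simp only [G, hFeq i j hsij]
    rw [rank_congr h1]
  · intro i j hsij htij
    have hlt' : ∀ w, w i < w j → e (rank w i) < e (rank w j) := fun w hw =>
      e.strictMono (rank_lt_rank hw)
    have hgt' : ∀ w, w j < w i → e (rank w j) < e (rank w i) := fun w hw =>
      e.strictMono (rank_lt_rank hw)
    have hrow : ∀ w, G w i = F j (e (rank w i)) := fun w => by simp only [G, hFeq i j hsij]
    rcases hC j with hm | ha
    · have step : ∀ w, w i < w j → G w i < G w j := fun w hw => by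
        rw [hrow]
        exact hm (heC _) (heC _) (hlt' w hw)
      exact step _ (step _ htij)
    · have step : ∀ w, w i < w j → G w j < G w i := fun w hw => by
        rw [hrow]
        exact ha (heC _) (heC _) (hlt' w hw)
      rw [hrow]
      exact ha (heC _) (heC _) (hgt' _ (step _ htij))

end Lex

/-- If `⟨Γ⟩` contains crisp `<`, some relation of `Γ` attains two distinct finite values,
and some lex-operation fails to preserve some crisp relation in `⟨Γ⟩`, then `⟨Γ⟩`
contains one of `Betw`, `Cyc`, `Sep`, `T₃`, `−T₃`, `Dis`. -/
theorem stmt13 (Γ : Set ((k : ℕ) × VRel k)) (hT : ∀ p ∈ Γ, Temporal p.2)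
    (hlt : Clone Γ (crisp LtS))
    (h2 : ∃ p ∈ Γ, ∃ s t : Fin p.1 → ℚ, p.2 s ≠ ⊤ ∧ p.2 t ≠ ⊤ ∧ p.2 s ≠ p.2 t)
    (hlex : ∃ (k : ℕ) (R : VRel k), Clone Γ R ∧ (∀ t, R t = 0 ∨ R t = ⊤) ∧
      ∃ l : ℚ → ℚ → ℚ, IsLex l ∧ ∃ s t : Fin k → ℚ,
        R s = 0 ∧ R t = 0 ∧ R (fun i => l (s i) (t i)) = ⊤) :
    Clone Γ (crisp BetwS) ∨ Clone Γ (crisp CycS) ∨ Clone Γ (crisp SepS) ∨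
      Clone Γ (crisp T3S) ∨ Clone Γ (crisp NegT3S) ∨ Clone Γ (crisp DisS) := by
  by_cases hh : Hard Γ
  · exact hh.imp id Or.inl
  exfalso
  obtain ⟨γ, hγ, hsoft⟩ : ∃ γ : WithTop ℚ, (γ = 0 ∨ γ = ⊤) ∧ Clone Γ (Rabc 1 0 γ) := by
    obtain ⟨p, hp, s, t, hs, ht, hne⟩ := h2
    rcases lt_or_gt_of_ne hne with hst | hst
    · exact (Clone.base hp).exists_soft hT hlt hh hst ht
    · exact (Clone.base hp).exists_soft hT hlt hh hst hs
  obtain ⟨k, R, hR, hcrisp, l, hl, s, t, hs, ht, hst⟩ := hlex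
  have hnn : ∀ x, 0 ≤ R x := fun x => by rcases hcrisp x with hx | hx <;> simp [hx]
  have h0 : R (fun i => l (s i) (t i)) = 0 := by
    rcases hγ with rfl | rfl
    · exact hR.lex_of_zero hT hlt hh hsoft hnn hs ht hl
    · exact hR.lex_of_top hT hlt hh hsoft hnn hs ht hl
  rw [hst] at h0
  exact WithTop.top_ne_zero h0
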